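/- Let A be a separable unital C*-algebra such that the extreme boundary ∂ₑT(A) of its trace space is compact, let G be a countable discrete group, and let α be an action of G on A. Suppose that the orbits of the induced action α* on ∂ₑT(A) are finite with uniformly bounded cardinality and that the orbit space ∂ₑT(A)/G, with the quotient topology, is Hausdorff. Then the averaging map ∂ₑT(A) → T(A) sending τ to τ^α = |G·τ|^{-1} ∑_{σ ∈ G·τ} σ is continuous (with respect to the weak* topologies). -/

import Mathlib

open MulAction in
/-- Averages over finite orbits are invariant. -/
lemma orbit_avg_continuous {G E : Type*} [Group G] [TopologicalSpace E] [CompactSpace E]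
    [MulAction G E] (hc : ∀ g : G, Continuous fun x : E => g • x)
    (hfin : ∀ x : E, (orbit G x).Finite) (r : E → E → Prop)
    (hr : ∀ x y, r x y ↔ y ∈ orbit G x) [T2Space (Quot r)] (f : E → ℂ) (hf : Continuous f) :
    Continuous fun x : E => ((orbit G x).ncard : ℝ)⁻¹ • ∑ᶠ y ∈ orbit G x, f y := by
  classical
  set μ : E → (E → ℂ) → ℂ := fun x u => ((orbit G x).ncard : ℝ)⁻¹ • ∑ᶠ y ∈ orbit G x, u y with hμ
  have hμs : ∀ x u, μ x u = ((hfin x).toFinset.card : ℝ)⁻¹ • ∑ y ∈ (hfin x).toFinset, u y := by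
    intro x u
    simp only [hμ]
    rw [finsum_mem_eq_finite_toFinset_sum _ (hfin x), Set.ncard_eq_toFinset_card _ (hfin x)]
  have hpos : ∀ x, ((hfin x).toFinset.card : ℝ) ≠ 0 := by
    intro x
    have : (hfin x).toFinset.Nonempty := ⟨x, by simp⟩
    exact_mod_cast this.card_pos.ne'
  have hinv : ∀ x (u : E → ℂ) (g : G), μ x (fun y => u (g • y)) = μ x u := by
    intro x u g
    have hsmem : ∀ (k : G) {y : E}, y ∈ orbit G x → k • y ∈ orbit G x := by
      rintro k _ ⟨m, rfl⟩
      exact ⟨k * m, mul_smul k m x⟩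
    rw [hμs, hμs]
    congr 1
    refine Finset.sum_bij (fun y _ => g • y) ?_ ?_ ?_ ?_
    · intro y hy
      rw [Set.Finite.mem_toFinset] at hy ⊢
      exact hsmem g hy
    · intro a _ b _ h
      exact smul_left_cancel g h
    · intro b hb
      exact ⟨g⁻¹ • b, by
        rw [Set.Finite.mem_toFinset] at hb ⊢
        exact hsmem _ hb, by simp⟩
    · intros; rfl
  have hest : ∀ x (u : E → ℂ) (c : ℂ) (ε : ℝ), (∀ y ∈ orbit G x, ‖u y - c‖ ≤ ε) →
      ‖μ x u - c‖ ≤ ε := by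
    intro x u c ε h
    have hcard := hpos x
    have e : μ x u - c = ((hfin x).toFinset.card : ℝ)⁻¹ • ∑ y ∈ (hfin x).toFinset, (u y - c) := by
      rw [hμs, Finset.sum_sub_distrib, smul_sub, Finset.sum_const, ← Nat.cast_smul_eq_nsmul ℝ,
        smul_smul, inv_mul_cancel₀ hcard, one_smul]
    rw [e, norm_smul, norm_inv, Real.norm_natCast]
    have h2 : ‖∑ y ∈ (hfin x).toFinset, (u y - c)‖ ≤ (hfin x).toFinset.card * ε := by
      refine (norm_sum_le_of_le _ (fun y hy => h y (by simpa using hy))).trans ?_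
      simp
    calc _ ≤ ((hfin x).toFinset.card : ℝ)⁻¹ * ((hfin x).toFinset.card * ε) := by gcongr
      _ = ε := by rw [← mul_assoc, inv_mul_cancel₀ hcard, one_mul]
  change Continuous fun x => μ x f
  rw [continuous_iff_continuousAt]
  intro x
  have : Finite (orbit G x) := (hfin x).to_subtype
  let p := toPermHom G (orbit G x)
  have : Finite p.range := inferInstance
  have : Fintype p.range := Fintype.ofFinite _
  let s : p.range → G := fun q => q.2.choose
  have hs : ∀ q, p (s q) = q := fun q => q.2.choose_spec
  have hsx : ∀ q (y : orbit G x), s q • (y : E) = ((q : Equiv.Perm (orbit G x)) y : E) := by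
    intro q y
    rw [← hs q]
    rfl
  have hQ : (Fintype.card p.range : ℝ) ≠ 0 := by exact_mod_cast Fintype.card_ne_zero
  let h : E → ℂ := fun y => (Fintype.card p.range : ℝ)⁻¹ • ∑ q : p.range, f (s q • y)
  have hhc : Continuous h := by
    have : Continuous fun y => ∑ q : p.range, f (s q • y) :=
      continuous_finsetSum _ fun q _ => hf.comp (hc (s q))
    exact this.const_smul ((Fintype.card p.range : ℝ)⁻¹)
  have hμh : ∀ z, μ z h = μ z f := by
    intro z
    have : μ z h = (Fintype.card p.range : ℝ)⁻¹ • ∑ q : p.range, μ z (fun y => f (s q • y)) := by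
      simp only [hμs, h]
      rw [← Finset.smul_sum, ← Finset.smul_sum, smul_comm, Finset.sum_comm]
    rw [this]
    simp only [hinv]
    rw [Finset.sum_const, Finset.card_univ, ← Nat.cast_smul_eq_nsmul ℝ, smul_smul,
      inv_mul_cancel₀ hQ, one_smul]
  have hconst : ∀ y ∈ orbit G x, h y = h x := by
    rintro _ ⟨g, rfl⟩
    simp only [h]
    congr 1
    let x0 : orbit G x := ⟨x, mem_orbit_self x⟩
    have e1 : ∀ q : p.range, f (s q • x) =
        f (((q : Equiv.Perm (orbit G x)) x0 : orbit G x) : E) := fun q => by rw [← hsx q x0]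
    have e2 : ∀ q : p.range, f (s q • g • x) =
        f ((((q * ⟨p g, g, rfl⟩ : p.range) : Equiv.Perm (orbit G x)) x0 : orbit G x) : E) := by
      intro q
      have := hsx q (g • x0)
      rw [orbit.coe_smul] at this
      change f (s q • g • (x0 : E)) = _
      rw [this]
      rfl
    change ∑ q : p.range, f (s q • g • x) = _
    rw [Finset.sum_congr rfl fun q _ => e1 q, Finset.sum_congr rfl fun q _ => e2 q]
    exact Equiv.sum_comp (Equiv.mulRight (⟨p g, g, rfl⟩ : p.range))
      (fun q : p.range => f (((q : Equiv.Perm (orbit G x)) x0 : orbit G x) : E))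
  have hμx : μ x f = h x := by
    rw [← hμh, ← sub_eq_zero, ← norm_le_zero_iff]
    exact hest _ _ _ _ fun y hy => by simp [hconst y hy]
  have hq : ∀ a b : E, Quot.mk r a = Quot.mk r b → a ∈ orbit G b := by
    intro a b hab
    have := congrArg (Quot.lift (fun z => orbit G z)
      (fun a b hab => (orbit_eq_iff.2 ((hr a b).1 hab)).symm)) hab
    exact orbit_eq_iff.1 this
  rw [Metric.continuousAt_iff']
  intro ε hε
  let C : Set E := {y | ε / 2 ≤ ‖h y - h x‖}
  have hC : IsClosed C := isClosed_le continuous_const (hhc.sub continuous_const).norm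
  have hqc : Continuous (Quot.mk r) := continuous_quot_mk
  have hqC : IsClosed (Quot.mk r '' C) := (hC.isCompact.image hqc).isClosed
  have hx : x ∈ (Quot.mk r ⁻¹' (Quot.mk r '' C))ᶜ := by
    rintro ⟨y, hy, hyx⟩
    have := hconst y (hq _ _ hyx)
    simp only [C, Set.mem_ofPred_eq, this, sub_self, norm_zero] at hy
    linarith
  filter_upwards [(hqC.preimage hqc).isOpen_compl.mem_nhds hx] with z hz
  rw [hμx, ← hμh, dist_eq_norm]
  refine lt_of_le_of_lt (hest z h (h x) (ε / 2) ?_) (by linarith)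
  intro y hy
  by_contra hcon
  exact hz ⟨y, (not_le.1 hcon).le, (Quot.sound ((hr z y).2 hy)).symm⟩


open scoped ComplexOrder

/-- A tracial state on a unital C*-algebra `A`, as an element of the weak-* dual. -/
def IsTracialState {A : Type*} [NormedRing A] [StarRing A] [NormedAlgebra ℂ A]
    (τ : WeakDual ℂ A) : Prop :=
  τ 1 = 1 ∧ (∀ a : A, 0 ≤ τ (star a * a)) ∧ ∀ a b : A, τ (a * b) = τ (b * a)

/-- The orbit `{τ ∘ α_g : g ∈ G}` of a functional `τ` under an action `α` of `G` on `A`. -/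
def traceOrbit {A : Type*} [NormedRing A] [StarRing A] [NormedAlgebra ℂ A]
    {G : Type*} (α : G → A ≃⋆ₐ[ℂ] A) (τ : WeakDual ℂ A) : Set (WeakDual ℂ A) :=
  {σ | ∃ g : G, ∀ a : A, σ a = τ (α g a)}

/-- Let `A` be a separable unital C*-algebra whose trace space has
compact extreme boundary `∂ₑT(A)`, let `α` be an action of a countable discrete group `G`
on `A` whose induced action on `∂ₑT(A)` has finite orbits of uniformly bounded cardinality
and Hausdorff orbit space.  Then the averaging map
`τ ↦ |G·τ|⁻¹ ∑_{σ ∈ G·τ} σ : ∂ₑT(A) → T(A)` is weak-* continuous. -/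
theorem stmt1 {A : Type*} [NormedRing A] [StarRing A] [CStarRing A]
    [NormedAlgebra ℂ A] [CompleteSpace A] [StarModule ℂ A]
    [TopologicalSpace.SeparableSpace A]
    {G : Type*} [Group G] [Countable G]
    (α : G → A ≃⋆ₐ[ℂ] A)
    (hα1 : ∀ a : A, α 1 a = a)
    (hαmul : ∀ (g h : G) (a : A), α (g * h) a = α g (α h a))
    (hcpt : IsCompact ({τ : WeakDual ℂ A | IsTracialState τ}.extremePoints ℝ))
    (M : ℕ)
    (horb : ∀ τ ∈ {τ : WeakDual ℂ A | IsTracialState τ}.extremePoints ℝ,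
      (traceOrbit α τ).Finite ∧ (traceOrbit α τ).ncard ≤ M)
    (hT2 : T2Space (Quot fun
        σ τ : ({τ : WeakDual ℂ A | IsTracialState τ}.extremePoints ℝ) =>
        (τ : WeakDual ℂ A) ∈ traceOrbit α (σ : WeakDual ℂ A))) :
    Continuous fun τ : ({τ : WeakDual ℂ A | IsTracialState τ}.extremePoints ℝ) =>
      (((traceOrbit α (τ : WeakDual ℂ A)).ncard : ℝ)⁻¹ •
        ∑ᶠ σ ∈ traceOrbit α (τ : WeakDual ℂ A), σ : WeakDual ℂ A) := by
  classical
  let _ : CStarAlgebra A := {}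
  let T : Set (WeakDual ℂ A) := {τ : WeakDual ℂ A | IsTracialState τ}
  have hcont : ∀ g, Continuous (α g) := fun g => (StarAlgEquiv.isometry (α g)).continuous
  let L : G → WeakDual ℂ A → WeakDual ℂ A := fun g τ =>
    StrongDual.toWeakDual ((WeakDual.toStrongDual τ).comp
      (⟨(α g⁻¹).toAlgEquiv.toLinearMap, hcont g⁻¹⟩ : A →L[ℂ] A))
  have hL : ∀ g τ a, L g τ a = τ (α g⁻¹ a) := fun g τ a => rfl
  have hLT : ∀ g, ∀ τ ∈ T, L g τ ∈ T := by
    rintro g τ ⟨h1, h2, h3⟩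
    refine ⟨?_, ?_, ?_⟩
    · rw [hL, map_one (α g⁻¹), h1]
    · intro a
      rw [hL, map_mul (α g⁻¹), map_star (α g⁻¹)]
      exact h2 _
    · intro a b
      rw [hL, hL, map_mul (α g⁻¹), map_mul (α g⁻¹), h3]
  have hL1 : ∀ τ, L 1 τ = τ := by
    intro τ
    refine DFunLike.ext _ _ fun a => ?_
    rw [hL, inv_one, hα1]
  have hLmul : ∀ g k τ, L (g * k) τ = L g (L k τ) := by
    intro g k τ
    refine DFunLike.ext _ _ fun a => ?_
    rw [hL, hL, hL, mul_inv_rev, hαmul]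
  have hLlin : ∀ g (c d : ℝ) (σ τ : WeakDual ℂ A), L g (c • σ + d • τ) = c • L g σ + d • L g τ :=
    fun g c d σ τ => rfl
  have hLinv : ∀ g τ, L g (L g⁻¹ τ) = τ := by
    intro g τ
    rw [← hLmul, mul_inv_cancel, hL1]
  have hLE : ∀ g, ∀ τ ∈ T.extremePoints ℝ, L g τ ∈ T.extremePoints ℝ := by
    intro g τ hτ
    refine ⟨hLT g τ hτ.1, ?_⟩
    rintro x hx y hy ⟨c, d, hc, hd, hcd, hxy⟩
    have h1 := hτ.2 (hLT g⁻¹ x hx) (hLT g⁻¹ y hy) ⟨c, d, hc, hd, hcd, by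
      rw [← hLlin, hxy]
      simpa using hLinv g⁻¹ τ⟩
    rw [← h1, hLinv]
  let _ : MulAction G (T.extremePoints ℝ) :=
    { smul := fun g τ => ⟨L g τ, hLE g τ τ.2⟩
      one_smul := fun τ => Subtype.ext (hL1 τ)
      mul_smul := fun g k τ => Subtype.ext (hLmul g k τ) }
  have hsm : ∀ (g : G) (τ : T.extremePoints ℝ), ((g • τ : T.extremePoints ℝ) : WeakDual ℂ A) =
    L g τ := fun g τ => rfl
  have horbit : ∀ τ : T.extremePoints ℝ,
      traceOrbit α (τ : WeakDual ℂ A) = Subtype.val '' MulAction.orbit G τ := by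
    intro τ
    ext σ
    constructor
    · rintro ⟨g, hg⟩
      refine ⟨g⁻¹ • τ, ⟨g⁻¹, rfl⟩, ?_⟩
      refine DFunLike.ext _ _ fun a => ?_
      rw [hsm, hL, inv_inv, hg]
    · rintro ⟨_, ⟨g, rfl⟩, rfl⟩
      exact ⟨g⁻¹, fun a => rfl⟩
  have hfin : ∀ τ : T.extremePoints ℝ, (MulAction.orbit G τ).Finite := by
    intro τ
    have := (horb τ τ.2).1
    rw [horbit] at this
    exact this.of_finite_image Subtype.val_injective.injOn
  have : CompactSpace (T.extremePoints ℝ) := isCompact_iff_compactSpace.1 hcpt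
  refine WeakDual.continuous_of_continuous_eval fun a => ?_
  have hc : ∀ g : G, Continuous fun τ : T.extremePoints ℝ => g • τ := by
    intro g
    refine Continuous.subtype_mk (WeakDual.continuous_of_continuous_eval fun a => ?_) _
    exact (WeakDual.eval_continuous (α g⁻¹ a)).comp continuous_subtype_val
  have key := orbit_avg_continuous hc hfin
    (fun σ τ : T.extremePoints ℝ => (τ : WeakDual ℂ A) ∈ traceOrbit α (σ : WeakDual ℂ A))
    (by
      intro σ τ
      rw [horbit]
      exact Subtype.val_injective.mem_set_image)
    (fun τ => (τ : WeakDual ℂ A) a)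
    ((WeakDual.eval_continuous a).comp continuous_subtype_val)
  convert key using 2 with τ
  rw [horbit τ, Set.ncard_image_of_injective _ Subtype.val_injective,
    finsum_mem_image Subtype.val_injective.injOn]
  let ev : WeakDual ℂ A →+ ℂ :=
    { toFun := fun σ => σ a, map_zero' := rfl, map_add' := fun _ _ => rfl }
  have := ev.map_finsum_mem (fun σ : T.extremePoints ℝ => (σ : WeakDual ℂ A)) (hfin τ)
  change ((MulAction.orbit G τ).ncard : ℝ)⁻¹ • ev (∑ᶠ σ ∈ MulAction.orbit G τ,
    (σ : WeakDual ℂ A)) = _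
  rw [this]
  rfl
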